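/- arXiv:2603.03497 — 13 statements merged into one kernel-verified Lean document; each statement's English description precedes it below -/
import Mathlib

section
/- Let c ≥ 0, T > 0, and let h : ℝ → ℝ be differentiable with h(0) > 0. Suppose that for every t ∈ [0, T] with h(t) > 0 one has -h'(t)/h(t)² ≤ c·h(t) (i.e., the derivative of the reciprocal barrier B(t) = 1/h(t) satisfies B'(t) ≤ c·h(t)). Then h(t) > 0 for all t ∈ [0, T]. -/
/-!
On `[a, b]` the function `h` is bounded above, hence the admissible growth rate of `1 / h` is less
than some constant `K ≥ 0`. Therefore `h` stays above `y t = 1 / (1 / h a + K * (t - a))`, the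
solution of the Riccati equation `y' = -K * y ^ 2` with `y a = h a`, which is positive for all
`t ≥ a`. The comparison inspects `h'` only at contact points `h t = y t`; there `h t > 0`, so the
growth bound is available and no first exit time is needed.
-/

open Set

section ReciprocalBarrier

variable {a b r t K : ℝ} {h h' : ℝ → ℝ}

theorem add_mul_sub_pos (hr : 0 < r) (hK : 0 ≤ K) (ht : a ≤ t) : 0 < r + K * (t - a) :=
  add_pos_of_pos_of_nonneg hr (mul_nonneg hK (sub_nonneg.2 ht))

theorem hasDerivAt_inv_affine (ht : r + K * (t - a) ≠ 0) :
    HasDerivAt (fun s ↦ (r + K * (s - a))⁻¹) (-K * (r + K * (t - a))⁻¹ ^ 2) t := by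
  have haffine : HasDerivAt (fun s ↦ r + K * (s - a)) K t := by
    simpa using (((hasDerivAt_id t).sub_const a).const_mul K).const_add r
  simpa only [inv_pow, div_eq_mul_inv] using haffine.fun_inv ht

theorem inv_affine_le_of_neg_deriv_div_sq_lt (hK : 0 ≤ K) (hcont : ContinuousOn h (Icc a b))
    (hderiv : ∀ t ∈ Ico a b, HasDerivWithinAt h (h' t) (Ici t) t) (ha : 0 < h a)
    (hbound : ∀ t ∈ Ico a b, 0 < h t → -h' t / h t ^ 2 < K) :
    ∀ t ∈ Icc a b, ((h a)⁻¹ + K * (t - a))⁻¹ ≤ h t := by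
  have hpos t (ht : a ≤ t) := add_mul_sub_pos (inv_pos.2 ha) hK ht
  have hriccati t (ht : a ≤ t) := hasDerivAt_inv_affine (hpos t ht).ne'
  have hcontact : ∀ t ∈ Ico a b, ((h a)⁻¹ + K * (t - a))⁻¹ = h t →
      -K * ((h a)⁻¹ + K * (t - a))⁻¹ ^ 2 < h' t := by
    intro t ht heq
    have hht : 0 < h t := heq ▸ inv_pos.2 (hpos t ht.1)
    rw [heq]
    linarith [(div_lt_iff₀ (pow_pos hht 2)).1 (hbound t ht hht)]
  exact image_le_of_deriv_right_lt_deriv_boundary'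
    (fun t ht ↦ (hriccati t ht.1).continuousAt.continuousWithinAt)
    (fun t ht ↦ (hriccati t ht.1).hasDerivWithinAt)
    (by simp) hcont hderiv hcontact

theorem pos_of_neg_deriv_div_sq_le (hcont : ContinuousOn h (Icc a b))
    (hderiv : ∀ t ∈ Ico a b, HasDerivWithinAt h (h' t) (Ici t) t) (ha : 0 < h a)
    (hbound : ∀ t ∈ Ico a b, 0 < h t → -h' t / h t ^ 2 ≤ K) :
    ∀ t ∈ Icc a b, 0 < h t := by
  intro t ht
  have hK : 0 ≤ |K| + 1 := by positivity
  have hlt : K < |K| + 1 := (le_abs_self K).trans_lt (lt_add_one _)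
  calc 0 < ((h a)⁻¹ + (|K| + 1) * (t - a))⁻¹ :=
        inv_pos.2 (add_mul_sub_pos (inv_pos.2 ha) hK ht.1)
    _ ≤ h t := inv_affine_le_of_neg_deriv_div_sq_lt hK hcont hderiv ha
        (fun s hs hpos ↦ (hbound s hs hpos).trans_lt hlt) t ht

theorem reciprocal_cbf_invariance_general {α : ℝ → ℝ} (hα : ∀ M, BddAbove (α '' Ioc 0 M))
    (hcont : ContinuousOn h (Icc a b))
    (hderiv : ∀ t ∈ Ico a b, HasDerivWithinAt h (h' t) (Ici t) t) (ha : 0 < h a)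
    (hineq : ∀ t ∈ Ico a b, 0 < h t → -h' t / h t ^ 2 ≤ α (h t)) :
    ∀ t ∈ Icc a b, 0 < h t := by
  obtain ⟨M, hM⟩ := isCompact_Icc.bddAbove_image hcont
  obtain ⟨K, hK⟩ := hα M
  refine pos_of_neg_deriv_div_sq_le (K := K) hcont hderiv ha fun t ht hpos ↦ ?_
  have hle : h t ≤ M := hM (mem_image_of_mem h (Ico_subset_Icc_self ht))
  exact (hineq t ht hpos).trans (hK (mem_image_of_mem α ⟨hpos, hle⟩))

end ReciprocalBarrier

theorem reciprocal_cbf_invariance (c T : ℝ) (hc : 0 ≤ c) (hT : 0 < T)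
    (h : ℝ → ℝ) (hdiff : Differentiable ℝ h) (h0 : 0 < h 0)
    (hineq : ∀ t ∈ Set.Icc 0 T, 0 < h t → -deriv h t / (h t) ^ 2 ≤ c * h t) :
    ∀ t ∈ Set.Icc 0 T, 0 < h t :=
  reciprocal_cbf_invariance_general (α := (c * ·))
    (fun _ ↦ (isCompact_Icc.bddAbove_image (by fun_prop)).mono (image_mono Ioc_subset_Icc_self))
    hdiff.continuous.continuousOn (fun t _ ↦ (hdiff t).hasDerivAt.hasDerivWithinAt) h0
    (fun t ht ↦ hineq t (Ico_subset_Icc_self ht))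
end

section
/- Let γ₁ > 0 and γ₂ > 0, and let h : ℝ → ℝ be twice differentiable. Suppose that h''(t) + (γ₁ + γ₂)·h'(t) + γ₁·γ₂·h(t) ≥ 0 for all t ≥ 0, that h(0) ≥ 0, and that h'(0) + γ₁·h(0) ≥ 0. Then for all t ≥ 0 one has h(t) ≥ 0 and h'(t) + γ₁·h(t) ≥ 0. -/
/-!
The barrier inequality says `h₂' ≥ -γ₂ h₂` for `h₂ = h' + γ₁ h`, so Grönwall's inequality applied
to `-h₂` shows that `h₂` stays nonnegative. This in turn says `h' ≥ -γ₁ h`, and the same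
comparison applied to `-h` shows that `h` stays nonnegative.
-/

open Set

theorem nonneg_of_neg_mul_le_deriv_right {g g' : ℝ → ℝ} {γ a b : ℝ}
    (hg : ContinuousOn g (Icc a b))
    (hg' : ∀ t ∈ Ico a b, HasDerivWithinAt g (g' t) (Ici t) t)
    (ha : 0 ≤ g a) (bound : ∀ t ∈ Ico a b, -γ * g t ≤ g' t) :
    ∀ t ∈ Icc a b, 0 ≤ g t := by
  intro t ht
  have neg_le_gronwallBound : -g t ≤ gronwallBound 0 (-γ) 0 (t - a) :=
    le_gronwallBound_of_liminf_deriv_right_le (f := -g) (f' := -g') hg.neg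
      (fun s hs _ hr ↦ (hg' s hs).neg.liminf_right_slope_le hr)
      (neg_nonpos.mpr ha)
      (fun s hs ↦ by simp only [Pi.neg_apply]; linarith [bound s hs]) t ht
  simpa [gronwallBound_ε0_δ0] using neg_le_gronwallBound

theorem exponential_cbf_invariance_general {h h' h'' : ℝ → ℝ} {γ₁ γ₂ a b : ℝ}
    (hcont : ContinuousOn h (Icc a b)) (hcont' : ContinuousOn h' (Icc a b))
    (hderiv : ∀ t ∈ Ico a b, HasDerivWithinAt h (h' t) (Ici t) t)
    (hderiv' : ∀ t ∈ Ico a b, HasDerivWithinAt h' (h'' t) (Ici t) t)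
    (hineq : ∀ t ∈ Ico a b, 0 ≤ h'' t + (γ₁ + γ₂) * h' t + γ₁ * γ₂ * h t)
    (ha : 0 ≤ h a) (ha' : 0 ≤ h' a + γ₁ * h a) :
    ∀ t ∈ Icc a b, 0 ≤ h t ∧ 0 ≤ h' t + γ₁ * h t := by
  have h₂_nonneg : ∀ t ∈ Icc a b, 0 ≤ h' t + γ₁ * h t :=
    nonneg_of_neg_mul_le_deriv_right (γ := γ₂) (hcont'.add (hcont.const_mul γ₁))
      (fun t ht ↦ (hderiv' t ht).add ((hderiv t ht).const_mul γ₁)) ha'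
      (fun t ht ↦ by linarith [hineq t ht])
  have h_nonneg : ∀ t ∈ Icc a b, 0 ≤ h t :=
    nonneg_of_neg_mul_le_deriv_right (γ := γ₁) hcont hderiv ha
      (fun t ht ↦ by linarith [h₂_nonneg t (Ico_subset_Icc_self ht)])
  exact fun t ht ↦ ⟨h_nonneg t ht, h₂_nonneg t ht⟩

theorem exponential_cbf_invariance (γ₁ γ₂ : ℝ) (hγ₁ : 0 < γ₁) (hγ₂ : 0 < γ₂)
    (h : ℝ → ℝ) (hdiff : Differentiable ℝ h) (hdiff2 : Differentiable ℝ (deriv h))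
    (hineq : ∀ t : ℝ, 0 ≤ t →
      deriv (deriv h) t + (γ₁ + γ₂) * deriv h t + γ₁ * γ₂ * h t ≥ 0)
    (h0 : 0 ≤ h 0) (h0' : 0 ≤ deriv h 0 + γ₁ * h 0) :
    ∀ t : ℝ, 0 ≤ t → 0 ≤ h t ∧ 0 ≤ deriv h t + γ₁ * h t := by
  intro t ht
  exact exponential_cbf_invariance_general
    hdiff.continuous.continuousOn hdiff2.continuous.continuousOn
    (fun s _ ↦ (hdiff s).hasDerivAt.hasDerivWithinAt)
    (fun s _ ↦ (hdiff2 s).hasDerivAt.hasDerivWithinAt)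
    (fun s hs ↦ hineq s hs.1) h0 h0' t ⟨ht, le_rfl⟩
end

section
/- Let β : ℝ → ℝ be locally Lipschitz, strictly increasing, and satisfy β(0) = 0. Let h : ℝ → ℝ be differentiable with h(t) > -1 for all t ≥ 0, and suppose h'(t) ≥ -β( h(t)/(h(t)+1) ) for all t ≥ 0. If h(0) ≥ 0, then h(t) ≥ 0 for all t ≥ 0. -/
/-!
For `r` slightly below `0` the number `r / (r + 1)` is negative, so there the constraint
`h' ≥ -β (h / (h + 1))` forces `h' ≥ 0`: just outside the safe set `{h ≥ 0}`, `h` cannot decrease,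
so it never leaves the safe set. To exclude a tangential exit, `h` is compared with slowly
decreasing negative barriers `-ε * (1 + t)`, whose slope `-ε` is strictly smaller than `h'` at a
crossing, and `ε` tends to `0`. On a bounded time interval these barriers stay close to `0` for
small `ε`, so values of `h` near the pole `-1` never come into play.
-/

open Set Filter Topology

section Comparison

variable {f f' B B' : ℝ → ℝ} {a b δ : ℝ}

theorem image_le_add_mul_of_deriv_right_le_of_image_mem_Ioo {ε : ℝ}
    (hf : ContinuousOn f (Icc a b))
    (hf' : ∀ x ∈ Ico a b, HasDerivWithinAt f (f' x) (Ici x) x)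
    (ha : f a ≤ B a)
    (hB : ContinuousOn B (Icc a b))
    (hB' : ∀ x ∈ Ico a b, HasDerivWithinAt B (B' x) (Ici x) x)
    (bound : ∀ x ∈ Ico a b, f x ∈ Ioo (B x) (B x + δ) → f' x ≤ B' x)
    (hε : 0 < ε) (hεδ : ε * (1 + (b - a)) < δ) ⦃x : ℝ⦄ (hx : x ∈ Icc a b) :
    f x ≤ B x + ε * (1 + (x - a)) := by
  have offset_deriv (y : ℝ) : HasDerivAt (fun y ↦ ε * (1 + (y - a))) ε y := by
    simpa using (((hasDerivAt_id y).sub_const a).const_add 1).const_mul ε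
  refine image_le_of_deriv_right_lt_deriv_boundary' (B' := fun y ↦ B' y + ε) hf hf' ?_
    (hB.add (by fun_prop)) (fun y hy ↦ (hB' y hy).add (offset_deriv y).hasDerivWithinAt) ?_ hx
  · simpa using ha.trans (le_add_of_nonneg_right hε.le)
  · intro y hy (hcross : f y = B y + ε * (1 + (y - a)))
    have offset_pos : 0 < ε * (1 + (y - a)) := mul_pos hε (by linarith [hy.1])
    have offset_lt : ε * (1 + (y - a)) < δ :=
      lt_of_le_of_lt (by gcongr; exact hy.2.le) hεδ
    have slope_le : f' y ≤ B' y := bound y hy (by constructor <;> linarith)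
    exact slope_le.trans_lt (lt_add_of_pos_right _ hε)

theorem image_le_of_deriv_right_le_of_image_mem_Ioo
    (hf : ContinuousOn f (Icc a b))
    (hf' : ∀ x ∈ Ico a b, HasDerivWithinAt f (f' x) (Ici x) x)
    (ha : f a ≤ B a)
    (hB : ContinuousOn B (Icc a b))
    (hB' : ∀ x ∈ Ico a b, HasDerivWithinAt B (B' x) (Ici x) x)
    (hδ : 0 < δ)
    (bound : ∀ x ∈ Ico a b, f x ∈ Ioo (B x) (B x + δ) → f' x ≤ B' x)
    ⦃x : ℝ⦄ (hx : x ∈ Icc a b) :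
    f x ≤ B x := by
  have tendsto_offset (y : ℝ) : Tendsto (fun ε : ℝ ↦ ε * (1 + (y - a))) (𝓝[>] 0) (𝓝 0) :=
    tendsto_nhdsWithin_of_tendsto_nhds (Continuous.tendsto' (by fun_prop) _ _ (zero_mul _))
  have tendsto_barrier :
      Tendsto (fun ε : ℝ ↦ B x + ε * (1 + (x - a))) (𝓝[>] 0) (𝓝 (B x)) := by
    simpa using (tendsto_offset x).const_add (B x)
  refine ge_of_tendsto tendsto_barrier ?_
  filter_upwards [self_mem_nhdsWithin, (tendsto_offset b).eventually_lt_const hδ]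
    with ε hε hεδ
  exact image_le_add_mul_of_deriv_right_le_of_image_mem_Ioo hf hf' ha hB hB' bound hε hεδ hx

end Comparison

theorem nonneg_of_neg_comp_le_deriv_right {α h h' : ℝ → ℝ} {a b δ : ℝ}
    (hδ : 0 < δ) (hα : ∀ r ∈ Ioo (-δ) 0, α r ≤ 0)
    (hcont : ContinuousOn h (Icc a b))
    (hderiv : ∀ t ∈ Ico a b, HasDerivWithinAt h (h' t) (Ici t) t)
    (hineq : ∀ t ∈ Ico a b, -α (h t) ≤ h' t)
    (ha : 0 ≤ h a) ⦃t : ℝ⦄ (ht : t ∈ Icc a b) :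
    0 ≤ h t := by
  refine image_le_of_deriv_right_le_of_image_mem_Ioo (f := fun _ ↦ 0) (f' := fun _ ↦ 0)
    continuousOn_const (fun _ _ ↦ hasDerivWithinAt_const ..) ha hcont hderiv hδ ?_ ht
  rintro s hs ⟨hneg, hnear⟩
  have rate_nonpos : α (h s) ≤ 0 := hα (h s) ⟨by linarith, hneg⟩
  exact (neg_nonneg.mpr rate_nonpos).trans (hineq s hs)

theorem graceful_primary_safety_general {β h h' : ℝ → ℝ}
    (hβ : ∀ r < 0, β r ≤ 0)
    (hcont : ContinuousOn h (Ici 0))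
    (hderiv : ∀ t, 0 ≤ t → HasDerivWithinAt h (h' t) (Ici t) t)
    (hineq : ∀ t, 0 ≤ t → -β (h t / (h t + 1)) ≤ h' t)
    (h0 : 0 ≤ h 0) (t : ℝ) (ht : 0 ≤ t) :
    0 ≤ h t := by
  have rate_nonpos : ∀ r ∈ Ioo (-1 : ℝ) 0, β (r / (r + 1)) ≤ 0 := fun r hr ↦
    hβ _ (div_neg_of_neg_of_pos hr.2 (by linarith [hr.1]))
  exact nonneg_of_neg_comp_le_deriv_right (α := fun r ↦ β (r / (r + 1))) one_pos rate_nonpos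
    (hcont.mono Icc_subset_Ici_self) (fun s hs ↦ hderiv s hs.1) (fun s hs ↦ hineq s hs.1) h0
    (right_mem_Icc.mpr ht)

theorem graceful_primary_safety (β : ℝ → ℝ)
    (hβlip : LocallyLipschitz β) (hβmono : StrictMono β) (hβ0 : β 0 = 0)
    (h : ℝ → ℝ) (hdiff : Differentiable ℝ h)
    (hgt : ∀ t : ℝ, 0 ≤ t → h t > -1)
    (hineq : ∀ t : ℝ, 0 ≤ t → deriv h t ≥ -β (h t / (h t + 1)))
    (h0 : 0 ≤ h 0) :
    ∀ t : ℝ, 0 ≤ t → 0 ≤ h t :=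
  graceful_primary_safety_general (fun _ hr ↦ hβ0 ▸ (hβmono hr).le)
    hdiff.continuous.continuousOn (fun t _ ↦ (hdiff t).hasDerivAt.hasDerivWithinAt) hineq h0
end

section
/- Let β : ℝ → ℝ be continuous, strictly increasing, with β(0) = 0. Let h : ℝ → ℝ be differentiable with -1 < h(0) < 0, and suppose that for every t ≥ 0 with h(t) > -1 one has h'(t) ≥ -β( h(t)/(h(t)+1) ). Then h(t) ≥ h(0) > -1 for all t ≥ 0. -/
open Set

/-! Every level `c ∈ (-1, 0)` with `c ≤ h a` is a barrier: wherever `h` meets it, `c / (c + 1) < 0`,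
so the constraint makes the right derivative of `h` positive and `h` cannot cross `c` downwards.
Letting `c` increase to `min (h a) 0` gives the bound. -/

theorem le_of_deriv_right_pos_of_eq {f f' : ℝ → ℝ} {a c : ℝ} (hf : ContinuousOn f (Ici a))
    (hf' : ∀ t ≥ a, HasDerivWithinAt f (f' t) (Ici t) t) (hca : c ≤ f a)
    (hpos : ∀ t ≥ a, f t = c → 0 < f' t) {t : ℝ} (ht : a ≤ t) : c ≤ f t :=
  image_le_of_deriv_right_lt_deriv_boundary' (f := fun _ ↦ c) (f' := fun _ ↦ 0)
    continuousOn_const (fun x _ ↦ hasDerivWithinAt_const x (Ici x) c) hca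
    (hf.mono Icc_subset_Ici_self) (fun x hx ↦ hf' x hx.1)
    (fun x hx hcx ↦ hpos x hx.1 hcx.symm) ⟨ht, le_rfl⟩

theorem graceful_failsafe_general {β h h' : ℝ → ℝ} {a : ℝ} (hβ : ∀ x < 0, β x < 0)
    (hcont : ContinuousOn h (Ici a)) (hderiv : ∀ t ≥ a, HasDerivWithinAt h (h' t) (Ici t) t)
    (ha : -1 < h a) (hineq : ∀ t ≥ a, h t ∈ Ioo (-1) 0 → -β (h t / (h t + 1)) ≤ h' t)
    {t : ℝ} (ht : a ≤ t) : min (h a) 0 ≤ h t := by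
  have barrier : ∀ c ∈ Ioo (-1) (min (h a) 0), c ≤ h t := by
    rintro c ⟨hc, hc'⟩
    obtain ⟨hca, hc0⟩ := lt_min_iff.mp hc'
    refine le_of_deriv_right_pos_of_eq hcont hderiv hca.le (fun s hs hsc ↦ ?_) ht
    have hquot : h s / (h s + 1) < 0 := div_neg_of_neg_of_pos (by linarith) (by linarith)
    calc
      0 < -β (h s / (h s + 1)) := neg_pos.mpr (hβ _ hquot)
      _ ≤ h' s := hineq s hs (hsc ▸ ⟨hc, hc0⟩)
  have hmin : -1 < min (h a) 0 := lt_min ha neg_one_lt_zero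
  exact (isLUB_Ioo hmin).2 barrier

theorem graceful_failsafe (β : ℝ → ℝ)
    (hβcont : Continuous β) (hβmono : StrictMono β) (hβ0 : β 0 = 0)
    (h : ℝ → ℝ) (hdiff : Differentiable ℝ h)
    (h0lb : -1 < h 0) (h0ub : h 0 < 0)
    (hineq : ∀ t : ℝ, 0 ≤ t → h t > -1 → deriv h t ≥ -β (h t / (h t + 1))) :
    ∀ t : ℝ, 0 ≤ t → h t ≥ h 0 := by
  intro t ht
  have hβ : ∀ x < 0, β x < 0 := fun x hx ↦ hβ0 ▸ hβmono hx
  simpa only [min_eq_left h0ub.le] using graceful_failsafe_general hβ hdiff.continuous.continuousOn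
    (fun s _ ↦ (hdiff s).hasDerivAt.hasDerivWithinAt) h0lb (fun s hs hD ↦ hineq s hs hD.1) ht
end

section
/- Let β : ℝ → ℝ be continuous, strictly increasing, with β(0) = 0. Let h : ℝ → ℝ be differentiable with -1 < h(0) < 0, and suppose that for every t ≥ 0 with h(t) > -1 one has h'(t) ≥ -β( h(t)/(h(t)+1) ). Then for every ε with 0 < ε < 1 there exists T ≥ 0 such that h(t) > -ε for all t ≥ T. -/
/-!
Let `-1 < c ≤ d < 0` with `c ≤ h 0`. While `h` lies in `[c, d]`, its derivative is at least the
positive constant `m = -β (d / (d + 1))`. If `m * t > d - c`, the segment from `(0, c)` to `(t, d)`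
has slope less than `m` and stays in the strip between `c` and `d`, so `h` cannot cross it
downwards. Hence `d ≤ h t`: this one comparison excludes both stalling below `d`
and falling back below it.
-/

open Filter Set

theorem monotoneOn_div_add {K : Type*} [Field K] [LinearOrder K] [IsStrictOrderedRing K]
    {a : K} (ha : 0 ≤ a) : MonotoneOn (fun x ↦ x / (x + a)) (Ioi (-a)) := by
  intro x hx y hy hxy
  have hxa : 0 < x + a := neg_lt_iff_pos_add.1 hx
  have hya : 0 < y + a := neg_lt_iff_pos_add.1 hy
  have hcross : x * (y + a) ≤ y * (x + a) := by
    linarith [mul_le_mul_of_nonneg_right hxy ha]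
  exact (div_le_div_iff₀ hxa hya).2 hcross

section DerivRight

variable {f f' : ℝ → ℝ} {a c d : ℝ}

theorem le_of_slope_lt_deriv_right {b : ℝ} (hab : a < b) (hcd : c ≤ d)
    (hf : ContinuousOn f (Icc a b))
    (hf' : ∀ x ∈ Ico a b, HasDerivWithinAt f (f' x) (Ici x) x) (hfa : c ≤ f a)
    (hslope : ∀ x ∈ Ico a b, f x ∈ Icc c d → (d - c) / (b - a) < f' x) : d ≤ f b := by
  set k := (d - c) / (b - a) with hk
  let line : ℝ → ℝ := fun x ↦ c + k * (x - a)
  have hk_nonneg : 0 ≤ k := div_nonneg (sub_nonneg.2 hcd) (sub_pos.2 hab).le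
  have line_a : line a = c := by simp [line]
  have line_b : line b = d := by
    simp only [line, hk, div_mul_cancel₀ _ (sub_pos.2 hab).ne', add_sub_cancel]
  have line_mono : Monotone line := fun _ _ hxy ↦
    add_le_add le_rfl (mul_le_mul_of_nonneg_left (sub_le_sub_right hxy a) hk_nonneg)
  have line_deriv (x : ℝ) : HasDerivAt line k x := by
    simpa only [mul_one] using (((hasDerivAt_id' x).sub_const a).const_mul k).const_add c
  have line_mem (x : ℝ) (hx : x ∈ Ico a b) : line x ∈ Icc c d :=
    ⟨line_a ▸ line_mono hx.1, line_b ▸ line_mono hx.2.le⟩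
  have line_le : line b ≤ f b :=
    image_le_of_deriv_right_lt_deriv_boundary' (by fun_prop)
      (fun x _ ↦ (line_deriv x).hasDerivWithinAt) (line_a.trans_le hfa) hf hf'
      (fun x hx hcross ↦ hslope x hx (hcross ▸ line_mem x hx)) (right_mem_Icc.2 hab.le)
  exact line_b ▸ line_le

theorem eventually_le_of_pos_le_deriv_right {m : ℝ} (hm : 0 < m) (hcd : c ≤ d)
    (hf : ContinuousOn f (Ici a)) (hf' : ∀ x ∈ Ici a, HasDerivWithinAt f (f' x) (Ici x) x)
    (hfa : c ≤ f a) (hslope : ∀ x ∈ Ici a, f x ∈ Icc c d → m ≤ f' x) :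
    ∀ᶠ t in atTop, d ≤ f t := by
  filter_upwards [eventually_gt_atTop a, eventually_gt_atTop (a + (d - c) / m)] with t hat ht
  have slope_lt : (d - c) / (t - a) < m :=
    (div_lt_comm₀ hm (sub_pos.2 hat)).1 (lt_sub_iff_add_lt'.2 ht)
  exact le_of_slope_lt_deriv_right hat hcd (hf.mono Icc_subset_Ici_self)
    (fun x hx ↦ hf' x hx.1) hfa fun x hx hfx ↦ slope_lt.trans_le (hslope x hx.1 hfx)

end DerivRight

theorem graceful_convergence_general {β h h' : ℝ → ℝ}
    (hβmono : MonotoneOn β (Iio 0)) (hβneg : ∀ x < 0, β x < 0)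
    (hcont : ContinuousOn h (Ici 0))
    (hderiv : ∀ t ∈ Ici 0, HasDerivWithinAt h (h' t) (Ici t) t) (h0 : -1 < h 0)
    (hineq : ∀ t ∈ Ici 0, h t ∈ Ioo (-1) 0 → -β (h t / (h t + 1)) ≤ h' t)
    {ε : ℝ} (hε : 0 < ε) : ∀ᶠ t in atTop, -ε < h t := by
  obtain ⟨d, hd, hd0⟩ : ∃ d, max (-1) (-ε) < d ∧ d < 0 :=
    exists_between (max_lt neg_one_lt_zero (neg_lt_zero.2 hε))
  obtain ⟨hd1, hdε⟩ := max_lt_iff.1 hd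
  have ratio_neg {x : ℝ} (hx : x ∈ Ioo (-1) 0) : x / (x + 1) < 0 :=
    div_neg_of_neg_of_pos hx.2 (neg_lt_iff_pos_add.1 hx.1)
  have hm : 0 < -β (d / (d + 1)) := neg_pos.2 (hβneg _ (ratio_neg ⟨hd1, hd0⟩))
  have hslope (t : ℝ) (ht : t ∈ Ici 0) (hmem : h t ∈ Icc (min (h 0) d) d) :
      -β (d / (d + 1)) ≤ h' t := by
    have hband : h t ∈ Ioo (-1) 0 := ⟨(lt_min h0 hd1).trans_le hmem.1, hmem.2.trans_lt hd0⟩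
    have ratio_le : h t / (h t + 1) ≤ d / (d + 1) :=
      monotoneOn_div_add zero_le_one hband.1 hd1 hmem.2
    have hβle : β (h t / (h t + 1)) ≤ β (d / (d + 1)) :=
      hβmono (ratio_neg hband) (ratio_neg ⟨hd1, hd0⟩) ratio_le
    exact (neg_le_neg hβle).trans (hineq t ht hband)
  exact (eventually_le_of_pos_le_deriv_right hm (min_le_right _ _) hcont hderiv
    (min_le_left _ _) hslope).mono fun _ ht ↦ hdε.trans_le ht

theorem graceful_convergence (β : ℝ → ℝ)
    (hβcont : Continuous β) (hβmono : StrictMono β) (hβ0 : β 0 = 0)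
    (h : ℝ → ℝ) (hdiff : Differentiable ℝ h)
    (h0lb : -1 < h 0) (h0ub : h 0 < 0)
    (hineq : ∀ t : ℝ, 0 ≤ t → h t > -1 → deriv h t ≥ -β (h t / (h t + 1))) :
    ∀ ε : ℝ, 0 < ε → ε < 1 → ∃ T : ℝ, 0 ≤ T ∧ ∀ t : ℝ, T ≤ t → h t > -ε := by
  intro ε hε _
  obtain ⟨T, hT⟩ := eventually_atTop.1 <| graceful_convergence_general
    (hβmono.monotone.monotoneOn _) (fun _ hx ↦ hβ0 ▸ hβmono hx) hdiff.continuous.continuousOn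
    (fun t _ ↦ (hdiff t).hasDerivAt.hasDerivWithinAt) h0lb
    (fun t ht hband ↦ hineq t ht hband.1) hε
  exact ⟨max T 0, le_max_right _ _, fun t ht ↦ hT t (le_of_max_le_left ht)⟩
end

section
/- Let γ > 0 and let h : ℝ → ℝ be differentiable at a point t with -1 < h(t) < 0 and h'(t) ≥ -γ·h(t)/(h(t)+1). Then the function t ↦ h(t) - ln(h(t) + 1) is differentiable at t and its derivative at t is at most -γ·( h(t)/(h(t)+1) )². -/
/-- The Lyapunov function `V(x) = x - ln (x + 1)` of the barrier value `x`, measuring how far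
`x ∈ (-1, 0)` is from the safe set `0 ≤ x`. It is meant on `-1 < x`; below `-1`, `Real.log` makes
it `x - ln |x + 1|`. -/
noncomputable def barrierLyapunov (x : ℝ) : ℝ :=
  x - Real.log (x + 1)

theorem hasDerivAt_barrierLyapunov {x : ℝ} (hx : x + 1 ≠ 0) :
    HasDerivAt barrierLyapunov (x / (x + 1)) x := by
  have hderiv : HasDerivAt barrierLyapunov (1 - 1 / (x + 1)) x :=
    (hasDerivAt_id x).sub (((hasDerivAt_id x).add_const 1).log hx)
  rwa [one_sub_div hx, add_sub_cancel_right] at hderiv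

theorem hasDerivAt_barrierLyapunov_comp {h : ℝ → ℝ} {h' t : ℝ} (hh : HasDerivAt h h' t)
    (ht : h t + 1 ≠ 0) :
    HasDerivAt (fun s => barrierLyapunov (h s)) (h' * (h t / (h t + 1))) t := by
  rw [mul_comm]
  exact (hasDerivAt_barrierLyapunov ht).comp t hh

theorem lyapunov_decrease_first_order_general {h : ℝ → ℝ} {r t : ℝ}
    (hdiff : DifferentiableAt ℝ h t) (hlb : -1 < h t) (hub : h t ≤ 0) (hr : r ≤ deriv h t) :
    DifferentiableAt ℝ (fun s => h s - Real.log (h s + 1)) t ∧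
      deriv (fun s => h s - Real.log (h s + 1)) t ≤ r * (h t / (h t + 1)) := by
  have hpos : 0 < h t + 1 := neg_lt_iff_pos_add.mp hlb
  have hV : HasDerivAt (fun s => h s - Real.log (h s + 1))
      (deriv h t * (h t / (h t + 1))) t :=
    hasDerivAt_barrierLyapunov_comp hdiff.hasDerivAt hpos.ne'
  have hslope : h t / (h t + 1) ≤ 0 := div_nonpos_of_nonpos_of_nonneg hub hpos.le
  refine ⟨hV.differentiableAt, ?_⟩
  rw [hV.deriv]
  exact mul_le_mul_of_nonpos_right hr hslope

theorem lyapunov_decrease_first_order (γ : ℝ) (hγ : 0 < γ)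
    (h : ℝ → ℝ) (t : ℝ) (hdiff : DifferentiableAt ℝ h t)
    (hlb : -1 < h t) (hub : h t < 0)
    (hineq : deriv h t ≥ -γ * h t / (h t + 1)) :
    DifferentiableAt ℝ (fun s => h s - Real.log (h s + 1)) t ∧
      deriv (fun s => h s - Real.log (h s + 1)) t ≤ -γ * (h t / (h t + 1)) ^ 2 := by
  rw [sq, ← mul_assoc, ← mul_div_assoc (-γ)]
  exact lyapunov_decrease_first_order_general hdiff hlb hub.le hineq
end

section
/- Let γ > 0 and let h : ℝ → ℝ be differentiable with h'(t) = -γ·h(t)/(h(t)+1) for all t ≥ 0 and -1 < h(0) < 0. Then for all t > 0 one has -1 < h(0) < h(t) < 0, the restriction of h to [0, ∞) is strictly increasing, and h(t) → 0 as t → ∞. -/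
/-!
Where `0 < γ` and `-1 < c < 0` the field `x ↦ -γ x / (x + 1)` is positive, so no solution can cross
such a level `c` downwards; hence a solution starting above the pole `-1` stays above it. There the
separated equation `(1 + 1/h) h' = -γ` says that `h * exp (h + γ t)` is a first integral. It fixes
the sign of `h`, and since `h` is bounded below it forces `|h t| ≤ C * exp (-γ t)`.
-/

section

open Filter Set Topology

variable {γ a t : ℝ} {h : ℝ → ℝ}

lemma le_of_isIntegralCurveOn_of_pos {v : ℝ → ℝ} {c : ℝ}
    (hh : IsIntegralCurveOn h (fun _ ↦ v) (Ici a)) (hc : 0 < v c) (ha : c ≤ h a) (ht : a ≤ t) :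
    c ≤ h t := by
  have hneg : -h t ≤ -c :=
    image_le_of_deriv_right_lt_deriv_boundary (f := fun x ↦ -h x) (f' := fun x ↦ -v (h x))
      (B := fun _ ↦ -c) (B' := fun _ ↦ 0) (hh.continuousOn.neg.mono Icc_subset_Ici_self)
      (fun x hx ↦ ((hh x hx.1).mono (Ici_subset_Ici.mpr hx.1)).neg) (neg_le_neg ha)
      (fun _ ↦ hasDerivAt_const _ _)
      (fun x _ hx ↦ by rwa [neg_inj.mp hx, neg_lt_zero]) ⟨ht, le_rfl⟩
  exact neg_le_neg_iff.mp hneg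

lemma strictMonoOn_of_isIntegralCurveOn_of_pos {v : ℝ → ℝ} {s : Set ℝ} (hs : Convex ℝ s)
    (hh : IsIntegralCurveOn h (fun _ ↦ v) s) (hv : ∀ x ∈ s, 0 < v (h x)) : StrictMonoOn h s :=
  strictMonoOn_of_hasDerivWithinAt_pos hs hh.continuousOn
    (fun x hx ↦ (hh x (interior_subset hx)).mono interior_subset)
    (fun x hx ↦ hv x (interior_subset hx))

/-- The right-hand side of the scalar equation `h' = -γ h / (h + 1)`, the equality case of the
graceful safety constraint with linear class-K function `r ↦ γ r`. At the pole `x = -1` its value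
is the junk value `0`. -/
noncomputable def gracefulField (γ x : ℝ) : ℝ := -γ * x / (x + 1)

lemma gracefulField_pos {x : ℝ} (hγ : 0 < γ) (hx : x ∈ Ioo (-1) 0) : 0 < gracefulField γ x :=
  div_pos (mul_pos_of_neg_of_neg (neg_neg_of_pos hγ) hx.2) (neg_lt_iff_pos_add.mp hx.1)

lemma neg_one_lt_of_isIntegralCurveOn_gracefulField (hγ : 0 < γ)
    (hh : IsIntegralCurveOn h (fun _ ↦ gracefulField γ) (Ici a)) (ha : -1 < h a) (ht : a ≤ t) :
    -1 < h t := by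
  obtain ⟨c, hc, hc_lt⟩ := exists_between (lt_min ha neg_one_lt_zero)
  have hca : c ≤ h a := (hc_lt.trans_le (min_le_left _ _)).le
  have hc0 : c < 0 := hc_lt.trans_le (min_le_right _ _)
  exact hc.trans_le (le_of_isIntegralCurveOn_of_pos hh (gracefulField_pos hγ ⟨hc, hc0⟩) hca ht)

lemma mul_exp_add_eq_of_isIntegralCurveOn_gracefulField {s : Set ℝ} (hs : Convex ℝ s)
    (hh : IsIntegralCurveOn h (fun _ ↦ gracefulField γ) s) (hne : ∀ x ∈ s, h x ≠ -1)
    (ha : a ∈ s) (ht : t ∈ s) :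
    h t * Real.exp (h t + γ * t) = h a * Real.exp (h a + γ * a) := by
  have hderiv : ∀ x ∈ s, HasDerivWithinAt (fun x ↦ h x * Real.exp (h x + γ * x)) 0 s x := by
    intro x hx
    have hpole : h x + 1 ≠ 0 := fun hx0 ↦ hne x hx (eq_neg_of_add_eq_zero_left hx0)
    refine ((hh x hx).fun_mul
      ((hh x hx).fun_add ((hasDerivWithinAt_id x s).const_mul γ)).exp).congr_deriv ?_
    simp only [gracefulField]
    field_simp
    ring
  have hle := hs.norm_image_sub_le_of_norm_hasDerivWithin_le (C := 0) hderiv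
    (fun _ _ ↦ norm_zero.le) ha ht
  rw [zero_mul, norm_le_zero_iff] at hle
  exact sub_eq_zero.mp hle

lemma neg_of_isIntegralCurveOn_gracefulField {s : Set ℝ} (hs : Convex ℝ s)
    (hh : IsIntegralCurveOn h (fun _ ↦ gracefulField γ) s) (hne : ∀ x ∈ s, h x ≠ -1)
    (ha : a ∈ s) (ha0 : h a < 0) (ht : t ∈ s) : h t < 0 := by
  have hprod : h t * Real.exp (h t + γ * t) < 0 := by
    rw [mul_exp_add_eq_of_isIntegralCurveOn_gracefulField hs hh hne ha ht]
    exact mul_neg_of_neg_of_pos ha0 (Real.exp_pos _)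
  exact neg_of_mul_neg_left hprod (Real.exp_pos _).le

lemma abs_le_mul_exp_of_isIntegralCurveOn_gracefulField (hγ : 0 < γ)
    (hh : IsIntegralCurveOn h (fun _ ↦ gracefulField γ) (Ici a)) (ha : -1 < h a) (ht : a ≤ t) :
    |h t| ≤ |h a| * Real.exp (h a + 1 - γ * (t - a)) := by
  have hlow : ∀ x ∈ Ici a, -1 < h x := fun _ ↦
    neg_one_lt_of_isIntegralCurveOn_gracefulField hγ hh ha
  have hconserved : h t * Real.exp (h t + γ * t) = h a * Real.exp (h a + γ * a) :=
    mul_exp_add_eq_of_isIntegralCurveOn_gracefulField (convex_Ici a) hh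
      (fun x hx ↦ (hlow x hx).ne') self_mem_Ici ht
  have himplicit : h t = h a * Real.exp (h a - h t - γ * (t - a)) := by
    calc h t = h t * Real.exp (h t + γ * t) * Real.exp (-(h t + γ * t)) := by
          rw [mul_assoc, ← Real.exp_add, add_neg_cancel, Real.exp_zero, mul_one]
      _ = h a * Real.exp (h a - h t - γ * (t - a)) := by
          rw [hconserved, mul_assoc, ← Real.exp_add]
          ring_nf
  calc |h t| = |h a| * Real.exp (h a - h t - γ * (t - a)) := by
        rw [← Real.abs_exp, ← abs_mul, ← himplicit]
    _ ≤ |h a| * Real.exp (h a + 1 - γ * (t - a)) := by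
        gcongr
        linarith [hlow t ht]

lemma tendsto_zero_of_isIntegralCurveOn_gracefulField (hγ : 0 < γ)
    (hh : IsIntegralCurveOn h (fun _ ↦ gracefulField γ) (Ici a)) (ha : -1 < h a) :
    Tendsto h atTop (𝓝 0) := by
  have hexponent : Tendsto (fun t ↦ h a + 1 - γ * (t - a)) atTop atBot :=
    tendsto_const_nhds.add_atBot <| tendsto_neg_atTop_atBot.comp <|
      (tendsto_atTop_add_const_right _ (-a) tendsto_id).const_mul_atTop hγ
  have hbound : Tendsto (fun t ↦ |h a| * Real.exp (h a + 1 - γ * (t - a))) atTop (𝓝 0) := by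
    simpa only [mul_zero, Function.comp_apply] using
      (Real.tendsto_exp_atBot.comp hexponent).const_mul |h a|
  refine squeeze_zero_norm' (eventually_atTop.mpr ⟨a, fun t ht ↦ ?_⟩) hbound
  exact abs_le_mul_exp_of_isIntegralCurveOn_gracefulField hγ hh ha ht

theorem graceful_ode_monotone_convergence_general (hγ : 0 < γ)
    (hh : IsIntegralCurveOn h (fun _ ↦ gracefulField γ) (Ici a)) (ha : h a ∈ Ioo (-1) 0) :
    (∀ t, a < t → h a < h t ∧ h t < 0) ∧ StrictMonoOn h (Ici a) ∧ Tendsto h atTop (𝓝 0) := by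
  have hlow : ∀ t ∈ Ici a, -1 < h t := fun _ ↦
    neg_one_lt_of_isIntegralCurveOn_gracefulField hγ hh ha.1
  have hneg : ∀ t ∈ Ici a, h t < 0 := fun _ ↦
    neg_of_isIntegralCurveOn_gracefulField (convex_Ici a) hh (fun x hx ↦ (hlow x hx).ne')
      self_mem_Ici ha.2
  have hmono : StrictMonoOn h (Ici a) :=
    strictMonoOn_of_isIntegralCurveOn_of_pos (convex_Ici a) hh
      fun t ht ↦ gracefulField_pos hγ ⟨hlow t ht, hneg t ht⟩
  exact ⟨fun t ht ↦ ⟨hmono self_mem_Ici ht.le ht, hneg t ht.le⟩, hmono,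
    tendsto_zero_of_isIntegralCurveOn_gracefulField hγ hh ha.1⟩

end

open Filter Topology in
theorem graceful_ode_monotone_convergence (γ : ℝ) (hγ : 0 < γ)
    (h : ℝ → ℝ) (hdiff : Differentiable ℝ h)
    (hode : ∀ t : ℝ, 0 ≤ t → deriv h t = -γ * h t / (h t + 1))
    (h0lb : -1 < h 0) (h0ub : h 0 < 0) :
    (∀ t : ℝ, 0 < t → h 0 < h t ∧ h t < 0) ∧
    StrictMonoOn h (Set.Ici 0) ∧
    Tendsto h atTop (𝓝 0) :=
  graceful_ode_monotone_convergence_general hγ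
    (fun t ht ↦ (hdiff t).hasDerivAt.hasDerivWithinAt.congr_deriv (hode t ht)) ⟨h0lb, h0ub⟩
end

section
/- Let γ > 0 and let h : ℝ → ℝ be differentiable with h'(t) = -γ·h(t)/(h(t)+1) for all t ≥ 0, and suppose -1 < h(t) < 0 for all t ≥ 0. Then for every τ ≥ 0 one has τ = -(1/γ)·( h(τ) + ln(-h(τ)) - h(0) - ln(-h(0)) ). -/
/-!
On a trajectory avoiding `-1` and `0`, the equation `h' = -γ h / (h + 1)` separates as
`(1 + 1 / h) h' = -γ`. The left-hand side is the derivative of `h + log |h|`, which therefore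
decreases at the constant rate `γ`.
-/

open Set

theorem sub_eq_sub_of_separable_ode {E : Type*} [NormedAddCommGroup E] [NormedSpace ℝ E]
    {x x' : ℝ → ℝ} {g G u U : ℝ → E} {a b : ℝ} (hab : a ≤ b)
    (hx_cont : ContinuousOn x (Icc a b))
    (hx : ∀ t ∈ Ico a b, HasDerivWithinAt x (x' t) (Ici t) t)
    (hG : ∀ t ∈ Icc a b, HasDerivAt G (g (x t)) (x t))
    (hU_cont : ContinuousOn U (Icc a b))
    (hU : ∀ t ∈ Ico a b, HasDerivWithinAt U (u t) (Ici t) t)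
    (hsep : ∀ t ∈ Ico a b, x' t • g (x t) = u t) :
    G (x b) - G (x a) = U b - U a := by
  have hGx_cont : ContinuousOn (G ∘ x) (Icc a b) := fun t ht ↦
    (hG t ht).continuousAt.comp_continuousWithinAt (hx_cont t ht)
  have hGx : ∀ t ∈ Ico a b, HasDerivWithinAt (G ∘ x) (u t) (Ici t) t := fun t ht ↦
    hsep t ht ▸ (hG t (Ico_subset_Icc_self ht)).scomp_hasDerivWithinAt t (hx t ht)
  have h_eq := eq_of_has_deriv_right_eq (f := fun t ↦ G (x t) - G (x a)) (g := fun t ↦ U t - U a)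
    (fun t ht ↦ (hGx t ht).sub_const _) (fun t ht ↦ (hU t ht).sub_const _)
    (hGx_cont.sub continuousOn_const) (hU_cont.sub continuousOn_const) (by simp)
  exact h_eq b (right_mem_Icc.mpr hab)

theorem hasDerivAt_add_log_abs {y : ℝ} (hy : y ≠ 0) :
    HasDerivAt (fun z ↦ z + Real.log |z|) (1 + y⁻¹) y := by
  simpa only [Real.log_abs] using (hasDerivAt_id' y).fun_add (Real.hasDerivAt_log hy)

theorem graceful_ode_implicit_solution_general {γ : ℝ} (hγ : γ ≠ 0) {h : ℝ → ℝ} {a b : ℝ}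
    (hab : a ≤ b) (hcont : ContinuousOn h (Icc a b))
    (hode : ∀ t ∈ Ico a b, HasDerivWithinAt h (-γ * h t / (h t + 1)) (Ici t) t)
    (hzero : ∀ t ∈ Icc a b, h t ≠ 0) (hneg_one : ∀ t ∈ Ico a b, h t ≠ -1) :
    b - a = -(1 / γ) * (h b + Real.log |h b| - h a - Real.log |h a|) := by
  have hsep : ∀ t ∈ Ico a b, (-γ * h t / (h t + 1)) • (1 + (h t)⁻¹) = -γ := by
    intro t ht
    have h_ne : h t ≠ 0 := hzero t (Ico_subset_Icc_self ht)
    have h_add_ne : h t + 1 ≠ 0 := fun h_add ↦ hneg_one t ht (eq_neg_of_add_eq_zero_left h_add)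
    rw [smul_eq_mul]
    field_simp
  have hrate : h b + Real.log |h b| - (h a + Real.log |h a|) = -γ * b - -γ * a :=
    sub_eq_sub_of_separable_ode (g := fun y ↦ 1 + y⁻¹) (G := fun y ↦ y + Real.log |y|)
      (U := fun t ↦ -γ * t) hab hcont hode (fun t ht ↦ hasDerivAt_add_log_abs (hzero t ht))
      (by fun_prop) (fun t _ ↦ (hasDerivAt_const_mul (-γ)).hasDerivWithinAt) hsep
  field_simp
  linarith

theorem graceful_ode_implicit_solution (γ : ℝ) (hγ : 0 < γ)
    (h : ℝ → ℝ) (hdiff : Differentiable ℝ h)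
    (hode : ∀ t : ℝ, 0 ≤ t → deriv h t = -γ * h t / (h t + 1))
    (hrange : ∀ t : ℝ, 0 ≤ t → -1 < h t ∧ h t < 0) :
    ∀ τ : ℝ, 0 ≤ τ →
      τ = -(1 / γ) * (h τ + Real.log (-h τ) - h 0 - Real.log (-h 0)) := by
  intro τ hτ
  simpa only [sub_zero, Real.log_abs, Real.log_neg_eq_log] using
    graceful_ode_implicit_solution_general hγ.ne' hτ hdiff.continuous.continuousOn
      (fun t ht ↦ hode t ht.1 ▸ (hdiff t).hasDerivAt.hasDerivWithinAt)
      (fun t ht ↦ (hrange t ht.1).2.ne) (fun t ht ↦ (hrange t ht.1).1.ne')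
end

section
/- Let γ > 0. Let y : ℝ → ℝ be differentiable with y'(t) = -γ·y(t)/(y(t)+1) and -1 < y(t) < 0 for all t ≥ 0. Let h : ℝ → ℝ be differentiable with h(0) = y(0), such that for every t ≥ 0 with h(t) > -1 one has h'(t) ≥ -γ·h(t)/(h(t)+1). Then h(t) ≥ y(t) for all t ≥ 0. -/
/-! Fix `T ≥ 0` and tilt the subsolution `y` to `y t - ε * t`. Where the tilted curve meets `h`, the
value of `h` is at most `y`, so, the rate `r ↦ -γ * r / (r + 1)` being antitone,
`y' - ε < -γ * y / (y + 1) ≤ -γ * h / (h + 1) ≤ h'`. Hence `h` can never be crossed from below on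
`[0, T]`, and `ε → 0` gives the claim. The differential inequality for `h` is available at the
meeting points because `y` is bounded away from `-1` on the compact interval `[0, T]`, so that the
tilted curve stays above `-1` for small `ε`. -/

open Set Filter Topology

theorem eventually_mapsTo_sub_smul {X R E : Type*} [TopologicalSpace X] [Semiring R]
    [TopologicalSpace R] [AddCommGroup E] [TopologicalSpace E] [ContinuousSub E] [Module R E]
    [ContinuousSMul R E] {f g : X → E} {K : Set X} {S : Set E} (hK : IsCompact K)
    (hf : ContinuousOn f K) (hg : ContinuousOn g K) (hS : IsOpen S) (hfS : MapsTo f K S) :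
    ∀ᶠ ε : R in 𝓝 0, MapsTo (fun x ↦ f x - ε • g x) K S := by
  have hcont : Continuous fun z : R × E × E ↦ z.2.1 - z.1 • z.2.2 := by fun_prop
  have hev : ∀ᶠ ε : R in 𝓝 0, ∀ p ∈ (fun x ↦ (f x, g x)) '' K, p.1 - ε • p.2 ∈ S := by
    refine (hK.image_of_continuousOn (hf.prodMk hg)).eventually_forall_of_forall_eventually ?_
    rintro _ ⟨x, hx, rfl⟩
    exact hcont.continuousAt.eventually_mem (hS.mem_nhds (by simpa using hfS hx))
  exact hev.mono fun ε hε x hx ↦ hε _ (mem_image_of_mem _ hx)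

section Comparison

variable {f f' g g' : ℝ → ℝ} {v : ℝ → ℝ → ℝ} {S : Set ℝ} {a b : ℝ}

theorem sub_mul_le_of_deriv_right_le_of_antitoneOn {ε : ℝ} (hε : 0 < ε)
    (hv : ∀ x ∈ Ico a b, AntitoneOn (v x) S)
    (hf : ContinuousOn f (Icc a b)) (hf' : ∀ x ∈ Ico a b, HasDerivWithinAt f (f' x) (Ici x) x)
    (hg : ContinuousOn g (Icc a b)) (hg' : ∀ x ∈ Ico a b, HasDerivWithinAt g (g' x) (Ici x) x)
    (ha : f a ≤ g a) (hfS : MapsTo f (Ico a b) S)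
    (hfεS : MapsTo (fun x ↦ f x - ε * (x - a)) (Ico a b) S)
    (hfv : ∀ x ∈ Ico a b, f' x ≤ v x (f x))
    (hgv : ∀ x ∈ Ico a b, g x ∈ S → v x (g x) ≤ g' x) :
    ∀ x ∈ Icc a b, f x - ε * (x - a) ≤ g x := by
  have htilt : ∀ x ∈ Ico a b,
      HasDerivWithinAt (fun x ↦ f x - ε * (x - a)) (f' x - ε) (Ici x) x := fun x hx ↦ by
    simpa using (hf' x hx).fun_sub (((hasDerivWithinAt_id x (Ici x)).sub_const a).const_mul ε)
  refine image_le_of_deriv_right_lt_deriv_boundary' (by fun_prop) htilt (by simpa using ha) hg hg'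
    fun x hx hmeet ↦ ?_
  have hgS : g x ∈ S := hmeet ▸ hfεS hx
  have hgf : g x ≤ f x := hmeet ▸ sub_le_self _ (mul_nonneg hε.le (sub_nonneg.2 hx.1))
  calc
    f' x - ε < f' x := sub_lt_self _ hε
    _ ≤ v x (f x) := hfv x hx
    _ ≤ v x (g x) := hv x hx hgS (hfS hx) hgf
    _ ≤ g' x := hgv x hx hgS

theorem le_of_deriv_right_le_of_antitoneOn (hS : IsOpen S)
    (hv : ∀ x ∈ Ico a b, AntitoneOn (v x) S)
    (hf : ContinuousOn f (Icc a b)) (hf' : ∀ x ∈ Ico a b, HasDerivWithinAt f (f' x) (Ici x) x)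
    (hg : ContinuousOn g (Icc a b)) (hg' : ∀ x ∈ Ico a b, HasDerivWithinAt g (g' x) (Ici x) x)
    (ha : f a ≤ g a) (hfS : MapsTo f (Icc a b) S)
    (hfv : ∀ x ∈ Ico a b, f' x ≤ v x (f x))
    (hgv : ∀ x ∈ Ico a b, g x ∈ S → v x (g x) ≤ g' x) :
    ∀ x ∈ Icc a b, f x ≤ g x := by
  intro x hx
  have htilted : ∀ᶠ ε in 𝓝[>] (0 : ℝ), f x - ε * (x - a) ≤ g x := by
    have hstay : ∀ᶠ ε : ℝ in 𝓝 0, MapsTo (fun x ↦ f x - ε • (x - a)) (Icc a b) S :=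
      eventually_mapsTo_sub_smul isCompact_Icc hf (by fun_prop) hS hfS
    filter_upwards [self_mem_nhdsWithin, hstay.filter_mono nhdsWithin_le_nhds] with ε hε hεS
    exact sub_mul_le_of_deriv_right_le_of_antitoneOn hε hv hf hf' hg hg' ha
      (hfS.mono_left Ico_subset_Icc_self) (hεS.mono_left Ico_subset_Icc_self) hfv hgv x hx
  have hlim : Tendsto (fun ε ↦ f x - ε * (x - a)) (𝓝[>] 0) (𝓝 (f x)) :=
    (Continuous.tendsto' (by fun_prop) 0 (f x) (by simp)).mono_left nhdsWithin_le_nhds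
  exact le_of_tendsto hlim htilted

end Comparison

theorem antitoneOn_neg_mul_div_add_one {𝕜 : Type*} [Field 𝕜] [LinearOrder 𝕜]
    [IsStrictOrderedRing 𝕜] {γ : 𝕜} (hγ : 0 ≤ γ) :
    AntitoneOn (fun r ↦ -γ * r / (r + 1)) (Ioi (-1)) := by
  intro r hr s hs hrs
  rw [mem_Ioi, neg_lt_iff_pos_add] at hr hs
  rw [div_le_div_iff₀ hs hr]
  linear_combination γ * hrs

theorem graceful_comparison_lemma_general {γ : ℝ} (hγ : 0 ≤ γ) {y y' h h' : ℝ → ℝ}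
    (hycont : ContinuousOn y (Ici 0)) (hyderiv : ∀ t, 0 ≤ t → HasDerivWithinAt y (y' t) (Ici t) t)
    (hyineq : ∀ t, 0 ≤ t → y' t ≤ -γ * y t / (y t + 1))
    (hyrange : ∀ t, 0 ≤ t → -1 < y t)
    (hcont : ContinuousOn h (Ici 0)) (hderiv : ∀ t, 0 ≤ t → HasDerivWithinAt h (h' t) (Ici t) t)
    (hinit : y 0 ≤ h 0)
    (hineq : ∀ t, 0 ≤ t → -1 < h t → -γ * h t / (h t + 1) ≤ h' t) :
    ∀ t, 0 ≤ t → y t ≤ h t := fun t ht ↦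
  le_of_deriv_right_le_of_antitoneOn isOpen_Ioi
    (fun _ _ ↦ antitoneOn_neg_mul_div_add_one hγ)
    (hycont.mono Icc_subset_Ici_self) (fun s hs ↦ hyderiv s hs.1)
    (hcont.mono Icc_subset_Ici_self) (fun s hs ↦ hderiv s hs.1)
    hinit (fun s hs ↦ hyrange s hs.1) (fun s hs ↦ hyineq s hs.1) (fun s hs ↦ hineq s hs.1)
    t (right_mem_Icc.2 ht)

theorem graceful_comparison_lemma (γ : ℝ) (hγ : 0 < γ)
    (y : ℝ → ℝ) (hydiff : Differentiable ℝ y)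
    (hyode : ∀ t : ℝ, 0 ≤ t → deriv y t = -γ * y t / (y t + 1))
    (hyrange : ∀ t : ℝ, 0 ≤ t → -1 < y t ∧ y t < 0)
    (h : ℝ → ℝ) (hdiff : Differentiable ℝ h) (hinit : h 0 = y 0)
    (hineq : ∀ t : ℝ, 0 ≤ t → h t > -1 → deriv h t ≥ -γ * h t / (h t + 1)) :
    ∀ t : ℝ, 0 ≤ t → h t ≥ y t :=
  graceful_comparison_lemma_general hγ.le
    hydiff.continuous.continuousOn (fun t _ ↦ (hydiff t).hasDerivAt.hasDerivWithinAt)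
    (fun t ht ↦ (hyode t ht).le) (fun t ht ↦ (hyrange t ht).1)
    hdiff.continuous.continuousOn (fun t _ ↦ (hdiff t).hasDerivAt.hasDerivWithinAt)
    hinit.ge hineq
end

section
/- Let ζ > 0 and ω > 0, and let h : ℝ → ℝ be twice differentiable with -1 < h(0) < 0. Suppose that for every t ≥ 0 with h(t) > -1 one has h''(t) + 2·ζ·ω·h'(t) + ω²·h(t)/(h(t)+1) ≥ 0. Then h(t) > -1 for all t ≥ 0. -/
/-!
Suppose `h` reaches the barrier `b` for the first time at `T`, and let `v` be its velocity and `c`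
the damping coefficient. Near `T` the spring pushes away from `b`, so the momentum `p = v + c h` is
nondecreasing there, and hence `v ≥ -M` for some `M > 0`. If `U` is the potential of the spring
force, this makes `p - U(h) / M` nondecreasing near `T` as well. Since `U(h) → ∞`, also `v → ∞` as
`t → T⁻`, so `h` is increasing just before `T` and cannot come down to `b`.
-/

open Filter Set Topology

theorem exists_first_hitting_time {α β : Type*} [ConditionallyCompleteLinearOrder α]
    [TopologicalSpace α] [OrderTopology α] [DenselyOrdered α] [LinearOrder β] [TopologicalSpace β]
    [OrderClosedTopology β] {f : α → β} {s t : α} {b : β} (hst : s ≤ t)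
    (hf : ContinuousOn f (Icc s t)) (hs : b < f s) (ht : f t ≤ b) :
    ∃ T ∈ Ioc s t, f T = b ∧ ∀ x ∈ Ico s T, b < f x := by
  have hits : ∀ x ∈ Icc s t, f x ≤ b → ∃ y ∈ Icc s x, f y = b := fun x hx hxb =>
    intermediate_value_Icc' hx.1 (hf.mono (Icc_subset_Icc_right hx.2)) ⟨hxb, hs.le⟩
  have hcompact : IsCompact (Icc s t ∩ f ⁻¹' {b}) :=
    isCompact_Icc.of_isClosed_subset (hf.preimage_isClosed_of_isClosed isClosed_Icc
      isClosed_singleton) inter_subset_left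
  obtain ⟨T, ⟨hT, hTb⟩, hleast⟩ :=
    hcompact.exists_isLeast (hits t (right_mem_Icc.2 hst) ht)
  have hsT : s ≠ T := by
    rintro rfl
    exact hs.ne' hTb
  refine ⟨T, ⟨hT.1.lt_of_ne hsT, hT.2⟩, hTb, fun x hx => ?_⟩
  by_contra! hxb
  obtain ⟨y, hy, hyb⟩ := hits x ⟨hx.1, hx.2.le.trans hT.2⟩ hxb
  exact (hy.2.trans_lt hx.2).not_ge (hleast ⟨⟨hy.1, hy.2.trans (hx.2.le.trans hT.2)⟩, hyb⟩)

section LeftNeighborhood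

variable {f f' : ℝ → ℝ} {T : ℝ}

theorem isBoundedUnder_ge_nhdsLT_of_deriv_nonneg
    (hf : ∀ᶠ t in 𝓝[<] T, HasDerivAt f (f' t) t) (hf' : ∀ᶠ t in 𝓝[<] T, 0 ≤ f' t) :
    IsBoundedUnder (· ≥ ·) (𝓝[<] T) f := by
  obtain ⟨s, hsT, hs⟩ := mem_nhdsLT_iff_exists_Ioo_subset.1 (hf.and hf')
  obtain ⟨r, hsr, hrT⟩ := exists_between (mem_Iio.1 hsT)
  have hmono : MonotoneOn f (Ioo s T) :=
    monotoneOn_of_hasDerivWithinAt_nonneg (convex_Ioo s T)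
      (fun t ht => (hs ht).1.continuousAt.continuousWithinAt)
      (fun t ht => (hs (interior_subset ht)).1.hasDerivWithinAt)
      (fun t ht => (hs (interior_subset ht)).2)
  refine isBoundedUnder_of_eventually_ge (a := f r) ?_
  filter_upwards [Ioo_mem_nhdsLT hrT] with t ht
  exact hmono ⟨hsr, hrT⟩ ⟨hsr.trans ht.1, ht.2⟩ ht.1.le

theorem eventually_nhdsLT_lt_of_deriv_pos (hcont : ContinuousWithinAt f (Iio T) T)
    (hf : ∀ᶠ t in 𝓝[<] T, HasDerivAt f (f' t) t) (hf' : ∀ᶠ t in 𝓝[<] T, 0 < f' t) :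
    ∀ᶠ t in 𝓝[<] T, f t < f T := by
  obtain ⟨s, hsT, hs⟩ := mem_nhdsLT_iff_exists_Ioo_subset.1 (hf.and hf')
  have hmono : StrictMonoOn f (Ioc s T) := by
    refine strictMonoOn_of_hasDerivWithinAt_pos (f' := f') (convex_Ioc s T) ?_ ?_ ?_
    · intro t ht
      rcases ht.2.eq_or_lt with rfl | htT
      · exact (continuousWithinAt_Iio_iff_Iic.1 hcont).mono Ioc_subset_Iic_self
      · exact (hs ⟨ht.1, htT⟩).1.continuousAt.continuousWithinAt
    · rw [interior_Ioc]
      exact fun t ht => (hs ht).1.hasDerivWithinAt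
    · rw [interior_Ioc]
      exact fun t ht => (hs ht).2
  filter_upwards [Ioo_mem_nhdsLT hsT] with t ht
  exact hmono ⟨ht.1, ht.2.le⟩ ⟨hsT, le_rfl⟩ ht.2

end LeftNeighborhood

/-- `U` is the potential of a spring term `k` that repels from the level `b` (a mass at position `x`
feels the force `-k x`), and it has an infinite barrier at `b`. Only positions slightly above `b`
matter. -/
structure IsBarrierPotential (U k : ℝ → ℝ) (b : ℝ) : Prop where
  hasDerivAt : ∀ᶠ x in 𝓝[>] b, HasDerivAt U (k x) x
  nonpos : ∀ᶠ x in 𝓝[>] b, k x ≤ 0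
  tendsto_atTop : Tendsto U (𝓝[>] b) atTop

namespace IsBarrierPotential

variable {U k h v a : ℝ → ℝ} {b c T : ℝ}

theorem isBoundedUnder_ge_velocity (hU : IsBarrierPotential U k b)
    (hT : Tendsto h (𝓝[<] T) (𝓝[>] b)) (hv : ∀ᶠ t in 𝓝[<] T, HasDerivAt h (v t) t)
    (ha : ∀ᶠ t in 𝓝[<] T, HasDerivAt v (a t) t)
    (hineq : ∀ᶠ t in 𝓝[<] T, 0 ≤ a t + c * v t + k (h t)) :
    IsBoundedUnder (· ≥ ·) (𝓝[<] T) v := by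
  have momentum_deriv : ∀ᶠ t in 𝓝[<] T,
      HasDerivAt (fun s => v s + c * h s) (a t + c * v t) t := by
    filter_upwards [hv, ha] with t hv ha using ha.add (hv.const_mul c)
  have momentum_deriv_nonneg : ∀ᶠ t in 𝓝[<] T, 0 ≤ a t + c * v t := by
    filter_upwards [hineq, hT.eventually hU.nonpos] with t hineq hk
    linarith
  have momentum_bdd := isBoundedUnder_ge_nhdsLT_of_deriv_nonneg momentum_deriv momentum_deriv_nonneg
  have damping_bdd : IsBoundedUnder (· ≥ ·) (𝓝[<] T) fun t => -(c * h t) :=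
    ((hT.mono_right nhdsWithin_le_nhds).const_mul c).neg.isBoundedUnder_ge
  simpa [Pi.add_def] using isBoundedUnder_ge_add momentum_bdd damping_bdd

theorem tendsto_velocity_atTop (hU : IsBarrierPotential U k b)
    (hT : Tendsto h (𝓝[<] T) (𝓝[>] b)) (hv : ∀ᶠ t in 𝓝[<] T, HasDerivAt h (v t) t)
    (ha : ∀ᶠ t in 𝓝[<] T, HasDerivAt v (a t) t)
    (hineq : ∀ᶠ t in 𝓝[<] T, 0 ≤ a t + c * v t + k (h t)) :
    Tendsto v (𝓝[<] T) atTop := by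
  obtain ⟨M, hM, hvM⟩ : ∃ M > 0, ∀ᶠ t in 𝓝[<] T, -M ≤ v t := by
    obtain ⟨m, hm⟩ := (hU.isBoundedUnder_ge_velocity hT hv ha hineq).eventually_ge
    refine ⟨|m| + 1, by positivity, hm.mono fun t ht => ?_⟩
    linarith [neg_abs_le m]
  have tilted_deriv : ∀ᶠ t in 𝓝[<] T, HasDerivAt (fun s => v s + c * h s - U (h s) / M)
      (a t + c * v t - k (h t) * v t / M) t := by
    filter_upwards [hv, ha, hT.eventually hU.hasDerivAt] with t hv ha hUt
    exact (ha.add (hv.const_mul c)).sub ((hUt.comp t hv).div_const M)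
  have tilted_deriv_nonneg : ∀ᶠ t in 𝓝[<] T, 0 ≤ a t + c * v t - k (h t) * v t / M := by
    filter_upwards [hineq, hT.eventually hU.nonpos, hvM] with t hineq hk hvM
    calc 0 ≤ -k (h t) * (v t + M) / M :=
          div_nonneg (mul_nonneg (neg_nonneg.2 hk) (by linarith)) hM.le
      _ = -k (h t) - k (h t) * v t / M := by field_simp; ring
      _ ≤ a t + c * v t - k (h t) * v t / M := by linarith
  obtain ⟨C, hC⟩ :=
    (isBoundedUnder_ge_nhdsLT_of_deriv_nonneg tilted_deriv tilted_deriv_nonneg).eventually_ge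
  have potential_atTop : Tendsto (fun t => U (h t) / M) (𝓝[<] T) atTop :=
    (hU.tendsto_atTop.comp hT).atTop_div_const hM
  have damping_tendsto : Tendsto (fun t => C - c * h t) (𝓝[<] T) (𝓝 (C - c * b)) :=
    ((hT.mono_right nhdsWithin_le_nhds).const_mul c).const_sub C
  refine tendsto_atTop_mono' _ (hC.mono fun t ht => ?_)
    (potential_atTop.atTop_add damping_tendsto)
  linarith

end IsBarrierPotential

theorem second_order_graceful_failsafe_general {U k h v a : ℝ → ℝ} {b c : ℝ}
    (hU : IsBarrierPotential U k b) (hcont : ContinuousOn h (Ici 0)) (h0 : b < h 0)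
    (hv : ∀ t > 0, b < h t → HasDerivAt h (v t) t)
    (ha : ∀ t > 0, b < h t → HasDerivAt v (a t) t)
    (hineq : ∀ t > 0, b < h t → 0 ≤ a t + c * v t + k (h t)) :
    ∀ t ≥ 0, b < h t := by
  intro t ht
  by_contra! htb
  obtain ⟨T, ⟨hT0, -⟩, rfl, hbefore⟩ :=
    exists_first_hitting_time ht (hcont.mono Icc_subset_Ici_self) h0 htb
  have hcontT : ContinuousWithinAt h (Iio T) T :=
    (hcont.continuousAt (Ici_mem_nhds hT0)).continuousWithinAt
  have hsafe : ∀ᶠ s in 𝓝[<] T, 0 < s ∧ h T < h s := by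
    filter_upwards [Ioo_mem_nhdsLT hT0] with s hs
    exact ⟨hs.1, hbefore s ⟨hs.1.le, hs.2⟩⟩
  have hvT := hsafe.mono fun s hs => hv s hs.1 hs.2
  have velocity_atTop : Tendsto v (𝓝[<] T) atTop :=
    hU.tendsto_velocity_atTop (tendsto_nhdsWithin_iff.2 ⟨hcontT, hsafe.mono fun _ hs => hs.2⟩)
      hvT (hsafe.mono fun s hs => ha s hs.1 hs.2) (hsafe.mono fun s hs => hineq s hs.1 hs.2)
  have hincr := eventually_nhdsLT_lt_of_deriv_pos hcontT hvT (velocity_atTop.eventually_gt_atTop 0)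
  obtain ⟨s, hs, hlt⟩ := (hsafe.and hincr).exists
  exact hs.2.not_gt hlt

/-- The potential of the stiffening spring `ω² x / (x + 1)`, i.e. the elastic part of the energy
`½ min(h', 0)² + ω² (h - ln (h + 1))`. -/
noncomputable def gracefulPotential (ω x : ℝ) : ℝ := ω ^ 2 * (x - Real.log (x + 1))

theorem hasDerivAt_gracefulPotential (ω : ℝ) {x : ℝ} (hx : x ≠ -1) :
    HasDerivAt (gracefulPotential ω) (ω ^ 2 * (x / (x + 1))) x := by
  have hx1 : x + 1 ≠ 0 := fun h => hx (eq_neg_of_add_eq_zero_left h)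
  have hderiv := ((hasDerivAt_id x).sub (((hasDerivAt_id x).add_const 1).log hx1)).const_mul (ω ^ 2)
  have hslope : 1 - 1 / (x + 1) = x / (x + 1) := by field_simp; ring
  exact hslope ▸ hderiv

theorem tendsto_gracefulPotential_atTop {ω : ℝ} (hω : ω ≠ 0) :
    Tendsto (gracefulPotential ω) (𝓝[>] (-1)) atTop := by
  have hshift : Tendsto (fun x : ℝ => x + 1) (𝓝[>] (-1)) (𝓝[>] 0) := by
    refine tendsto_nhdsWithin_iff.2 ⟨?_, ?_⟩
    · exact ((continuous_add_const 1).tendsto' (-1 : ℝ) 0 (by norm_num)).mono_left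
        nhdsWithin_le_nhds
    · filter_upwards [self_mem_nhdsWithin] with x hx
      exact neg_lt_iff_pos_add.1 (mem_Ioi.1 hx)
  have hlog : Tendsto (fun x : ℝ => -Real.log (x + 1)) (𝓝[>] (-1)) atTop :=
    tendsto_neg_atBot_atTop.comp (Real.tendsto_log_nhdsGT_zero.comp hshift)
  have hid : Tendsto (fun x : ℝ => x) (𝓝[>] (-1)) (𝓝 (-1)) := nhdsWithin_le_nhds
  exact (hid.add_atTop hlog).const_mul_atTop (by positivity)

theorem isBarrierPotential_gracefulPotential {ω : ℝ} (hω : ω ≠ 0) :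
    IsBarrierPotential (gracefulPotential ω) (fun x => ω ^ 2 * (x / (x + 1))) (-1) where
  hasDerivAt := by
    filter_upwards [self_mem_nhdsWithin] with x hx
    exact hasDerivAt_gracefulPotential ω (ne_of_gt hx)
  nonpos := by
    filter_upwards [Ioo_mem_nhdsGT neg_one_lt_zero] with x hx
    exact mul_nonpos_of_nonneg_of_nonpos (sq_nonneg ω)
      (div_nonpos_of_nonpos_of_nonneg hx.2.le (by linarith [hx.1]))
  tendsto_atTop := tendsto_gracefulPotential_atTop hω

theorem second_order_graceful_failsafe (ζ ω : ℝ) (hζ : 0 < ζ) (hω : 0 < ω)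
    (h : ℝ → ℝ) (hdiff : Differentiable ℝ h) (hdiff2 : Differentiable ℝ (deriv h))
    (h0lb : -1 < h 0) (h0ub : h 0 < 0)
    (hineq : ∀ t : ℝ, 0 ≤ t → h t > -1 →
      deriv (deriv h) t + 2 * ζ * ω * deriv h t + ω ^ 2 * (h t / (h t + 1)) ≥ 0) :
    ∀ t : ℝ, 0 ≤ t → h t > -1 :=
  second_order_graceful_failsafe_general (isBarrierPotential_gracefulPotential hω.ne')
    hdiff.continuous.continuousOn h0lb (fun t _ _ => (hdiff t).hasDerivAt)
    (fun t _ _ => (hdiff2 t).hasDerivAt) fun t ht => hineq t ht.le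
end

section
/- Let ζ > 0 and ω > 0, and let h : ℝ → ℝ be twice differentiable at a point t with h(t) > -1, h'(t) < 0, and h''(t) + 2·ζ·ω·h'(t) + ω²·h(t)/(h(t)+1) ≥ 0. Then the function V(t) = ½·(min(h'(t), 0))² + ω²·( h(t) - ln(h(t)+1) ) is differentiable at t with derivative at most -2·ζ·ω·(h'(t))² < 0. -/
/-!
Near a time at which `h' < 0` the truncation `min h' 0` is just `h'`, so `V` is there the energy of
an oscillator with potential `ω² (h - log (h + 1))`, and `V'` is the product of `h'` with
`h'' + ω² h / (h + 1)`. The constraint bounds this factor below by the damping term `-2 ζ ω h'`;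
multiplying by `h' < 0` turns this into an upper bound on `V'`.
-/

theorem hasDerivAt_min_of_lt {𝕜 F : Type*} [NontriviallyNormedField 𝕜] [NormedAddCommGroup F]
    [NormedSpace 𝕜 F] [LinearOrder F] [OrderClosedTopology F] {f g : 𝕜 → F} {f' : F} {x : 𝕜}
    (hf : HasDerivAt f f' x) (hg : ContinuousAt g x) (hfg : f x < g x) :
    HasDerivAt (fun y => min (f y) (g y)) f' x :=
  hf.congr_of_eventuallyEq <|
    (hf.continuousAt.eventually_lt hg hfg).mono fun _ hy => min_eq_left hy.le

theorem hasDerivAt_sub_log_add_one {x : ℝ} (hx : x + 1 ≠ 0) :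
    HasDerivAt (fun y => y - Real.log (y + 1)) (x / (x + 1)) x := by
  refine ((hasDerivAt_id x).sub (((hasDerivAt_id x).add_const 1).log hx)).congr_deriv ?_
  rw [id, one_sub_div hx, add_sub_cancel_right]

theorem mul_le_neg_mul_sq_of_nonpos {R : Type*} [CommRing R] [PartialOrder R] [IsOrderedRing R]
    {a k v : R} (hv : v ≤ 0) (hak : 0 ≤ a + k * v) : a * v ≤ -k * v ^ 2 :=
  calc
    a * v ≤ -(k * v) * v := mul_le_mul_of_nonpos_right (neg_le_iff_add_nonneg.mpr hak) hv
    _ = -k * v ^ 2 := by ring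

/-- The energy-like Lyapunov function `V` of the second-order graceful safety constraint with
frequency `ω`, as a function of the constraint value `x = h` and its rate `v = h'`; only negative
rates contribute to the kinetic term. For `x ≤ -1` the value of `Real.log` carries no meaning. -/
noncomputable def gracefulLyapunov (ω x v : ℝ) : ℝ :=
  (1 / 2) * (min v 0) ^ 2 + ω ^ 2 * (x - Real.log (x + 1))

theorem hasDerivAt_gracefulLyapunov_of_neg {ω a t : ℝ} {x v : ℝ → ℝ}
    (hx : HasDerivAt x (v t) t) (hv : HasDerivAt v a t) (hxt : x t + 1 ≠ 0) (hneg : v t < 0) :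
    HasDerivAt (fun s => gracefulLyapunov ω (x s) (v s))
      ((a + ω ^ 2 * (x t / (x t + 1))) * v t) t := by
  have kinetic : HasDerivAt (fun s => (1 / 2) * (min (v s) 0) ^ 2) (a * v t) t := by
    refine (((hasDerivAt_min_of_lt hv continuousAt_const hneg).pow 2).const_mul _).congr_deriv ?_
    rw [min_eq_left hneg.le]
    ring
  have potential : HasDerivAt (fun s => ω ^ 2 * (x s - Real.log (x s + 1)))
      (ω ^ 2 * (x t / (x t + 1) * v t)) t :=
    ((hasDerivAt_sub_log_add_one hxt).comp t hx).const_mul _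
  exact (kinetic.add potential).congr_deriv (by ring)

open Filter Topology in
theorem second_order_lyapunov_decrease_neg_rate (ζ ω : ℝ) (hζ : 0 < ζ) (hω : 0 < ω)
    (h : ℝ → ℝ) (t : ℝ)
    (hdiff : ∀ᶠ s in 𝓝 t, DifferentiableAt ℝ h s)
    (hdiff2 : DifferentiableAt ℝ (deriv h) t)
    (hlb : -1 < h t) (hneg : deriv h t < 0)
    (hineq : deriv (deriv h) t + 2 * ζ * ω * deriv h t + ω ^ 2 * (h t / (h t + 1)) ≥ 0) :
    DifferentiableAt ℝ
      (fun s => (1 / 2) * (min (deriv h s) 0) ^ 2 + ω ^ 2 * (h s - Real.log (h s + 1))) t ∧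
    deriv (fun s => (1 / 2) * (min (deriv h s) 0) ^ 2 + ω ^ 2 * (h s - Real.log (h s + 1))) t
      ≤ -2 * ζ * ω * (deriv h t) ^ 2 ∧
    -2 * ζ * ω * (deriv h t) ^ 2 < 0 := by
  have hV := hasDerivAt_gracefulLyapunov_of_neg (ω := ω) hdiff.self_of_nhds.hasDerivAt
    hdiff2.hasDerivAt (by linarith) hneg
  have damping_bound :
      0 ≤ deriv (deriv h) t + ω ^ 2 * (h t / (h t + 1)) + 2 * ζ * ω * deriv h t := by
    linarith
  have damping_pos : 0 < 2 * ζ * ω * deriv h t ^ 2 :=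
    mul_pos (by positivity) (sq_pos_of_neg hneg)
  refine ⟨hV.differentiableAt, hV.deriv.trans_le ?_, by linarith⟩
  simpa only [neg_mul] using mul_le_neg_mul_sq_of_nonpos hneg.le damping_bound
end

section
/- Let ζ > 0 and ω > 0, and let h : ℝ → ℝ be twice differentiable at a point t with -1 < h(t) < 0 and h'(t) > 0. Then the function V(t) = ½·(min(h'(t), 0))² + ω²·( h(t) - ln(h(t)+1) ) is differentiable at t with derivative equal to ω²·( h(t)/(h(t)+1) )·h'(t), which is negative. -/
open Topology in
theorem eventuallyEq_min_of_continuousAt_of_lt {X α : Type*} [TopologicalSpace X]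
    [LinearOrder α] [TopologicalSpace α] [OrderClosedTopology α] {f g : X → α} {x : X}
    (hf : ContinuousAt f x) (hg : ContinuousAt g x) (hgf : g x < f x) :
    (fun y => min (f y) (g y)) =ᶠ[𝓝 x] g :=
  (hg.eventually_lt hf hgf).mono fun _ hy => min_eq_right hy.le

theorem hasDerivAt_half_sq_min_zero_of_pos {v : ℝ → ℝ} {t : ℝ} (hv : ContinuousAt v t)
    (hpos : 0 < v t) : HasDerivAt (fun s => (1 / 2) * (min (v s) 0) ^ 2) 0 t := by
  have hmin : HasDerivAt (fun s => min (v s) 0) 0 t :=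
    (hasDerivAt_const t 0).congr_of_eventuallyEq
      (eventuallyEq_min_of_continuousAt_of_lt hv continuousAt_const hpos)
  exact ((hmin.fun_pow 2).const_mul (1 / 2)).congr_deriv (by simp)

theorem second_order_lyapunov_decrease_pos_rate_general {ω : ℝ} (hω : ω ≠ 0) {h : ℝ → ℝ} {t : ℝ}
    (hcont : ContinuousAt (deriv h) t) (hlb : -1 < h t) (hub : h t < 0) (hpos : 0 < deriv h t) :
    HasDerivAt
      (fun s => (1 / 2) * (min (deriv h s) 0) ^ 2 + ω ^ 2 * (h s - Real.log (h s + 1)))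
      (ω ^ 2 * (h t / (h t + 1)) * deriv h t) t ∧
    ω ^ 2 * (h t / (h t + 1)) * deriv h t < 0 := by
  have hgap : 0 < h t + 1 := neg_lt_iff_pos_add.mp hlb
  have hh : HasDerivAt h (deriv h t) t :=
    (differentiableAt_of_deriv_ne_zero hpos.ne').hasDerivAt
  have hpotential : HasDerivAt (fun s => ω ^ 2 * (h s - Real.log (h s + 1)))
      (ω ^ 2 * (h t / (h t + 1)) * deriv h t) t :=
    ((hasDerivAt_sub_log_add_one hgap.ne').const_mul (ω ^ 2)).comp t hh
  constructor
  · simpa only [zero_add] using (hasDerivAt_half_sq_min_zero_of_pos hcont hpos).fun_add hpotential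
  · have hforce : h t / (h t + 1) < 0 := div_neg_of_neg_of_pos hub hgap
    exact mul_neg_of_neg_of_pos (mul_neg_of_pos_of_neg (sq_pos_of_ne_zero hω) hforce) hpos

open Filter Topology in
theorem second_order_lyapunov_decrease_pos_rate (ζ ω : ℝ) (hζ : 0 < ζ) (hω : 0 < ω)
    (h : ℝ → ℝ) (t : ℝ)
    (hdiff : ∀ᶠ s in 𝓝 t, DifferentiableAt ℝ h s)
    (hdiff2 : DifferentiableAt ℝ (deriv h) t)
    (hlb : -1 < h t) (hub : h t < 0) (hpos : 0 < deriv h t) :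
    DifferentiableAt ℝ
      (fun s => (1 / 2) * (min (deriv h s) 0) ^ 2 + ω ^ 2 * (h s - Real.log (h s + 1))) t ∧
    deriv (fun s => (1 / 2) * (min (deriv h s) 0) ^ 2 + ω ^ 2 * (h s - Real.log (h s + 1))) t
      = ω ^ 2 * (h t / (h t + 1)) * deriv h t ∧
    ω ^ 2 * (h t / (h t + 1)) * deriv h t < 0 := by
  obtain ⟨hV, hneg⟩ := second_order_lyapunov_decrease_pos_rate_general hω.ne'
    hdiff2.continuousAt hlb hub hpos
  exact ⟨hV.differentiableAt, hV.deriv, hneg⟩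
end

section
/- Let γ₁ > 0 and γ₂ > 0, and let h : ℝ → ℝ be twice differentiable with h(t) > -1 for all t ≥ 0. Suppose that h''(t) + (γ₁ + γ₂)·h'(t) + γ₁·γ₂·h(t)/(h(t)+1) ≥ 0 for all t ≥ 0, that h(0) ≥ 0, and that h'(0) + γ₁·h(0) ≥ 0. Then for all t ≥ 0 one has h(t) ≥ 0 and h'(t) + γ₁·h(t) ≥ 0. -/
/-!
On the region `-1 < h` the graceful term satisfies `h / (h + 1) ≤ h`, so the constraint implies the
linear inequality `h'' + (γ₁ + γ₂) h' + γ₁ γ₂ h ≥ 0`. Its left-hand side factors as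
`(d/dt + γ₂) (d/dt + γ₁) h`, so two applications of the integrating factor `exp (c t)`, first to
`h' + γ₁ h` with `c = γ₂` and then to `h` with `c = γ₁`, propagate nonnegativity forward in time.
-/

section DifferentialInequality

variable {s : Set ℝ} {t₀ c γ₁ γ₂ : ℝ} {f f' f'' : ℝ → ℝ}

theorem monotoneOn_exp_mul_of_deriv_add_mul_nonneg (hs : Convex ℝ s)
    (hf : ∀ t ∈ s, HasDerivWithinAt f (f' t) s t) (hineq : ∀ t ∈ s, 0 ≤ f' t + c * f t) :
    MonotoneOn (fun t ↦ Real.exp (c * t) * f t) s := by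
  have hderiv : ∀ t ∈ s, HasDerivWithinAt (fun t ↦ Real.exp (c * t) * f t)
      (Real.exp (c * t) * (f' t + c * f t)) s t := fun t ht ↦
    ((((hasDerivWithinAt_id t s).const_mul c).exp).mul (hf t ht)).congr_deriv (by
      simp only [id_eq]
      ring)
  exact monotoneOn_of_hasDerivWithinAt_nonneg hs (fun t ht ↦ (hderiv t ht).continuousWithinAt)
    (fun t ht ↦ (hderiv t (interior_subset ht)).mono interior_subset)
    (fun t ht ↦ mul_nonneg (Real.exp_pos _).le (hineq t (interior_subset ht)))

theorem nonneg_of_deriv_add_mul_nonneg (hs : Convex ℝ s) (ht₀ : IsLeast s t₀)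
    (hf : ∀ t ∈ s, HasDerivWithinAt f (f' t) s t) (hineq : ∀ t ∈ s, 0 ≤ f' t + c * f t)
    (hinit : 0 ≤ f t₀) : ∀ t ∈ s, 0 ≤ f t := by
  intro t ht
  have hexp : 0 ≤ Real.exp (c * t) * f t :=
    calc
      0 ≤ Real.exp (c * t₀) * f t₀ := mul_nonneg (Real.exp_pos _).le hinit
      _ ≤ Real.exp (c * t) * f t :=
        monotoneOn_exp_mul_of_deriv_add_mul_nonneg hs hf hineq ht₀.1 ht (ht₀.2 ht)
  exact nonneg_of_mul_nonneg_right hexp (Real.exp_pos _)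

theorem nonneg_and_deriv_add_mul_nonneg_of_second_order (hs : Convex ℝ s) (ht₀ : IsLeast s t₀)
    (hf : ∀ t ∈ s, HasDerivWithinAt f (f' t) s t)
    (hf' : ∀ t ∈ s, HasDerivWithinAt f' (f'' t) s t)
    (hineq : ∀ t ∈ s, 0 ≤ f'' t + (γ₁ + γ₂) * f' t + γ₁ * γ₂ * f t)
    (hinit : 0 ≤ f t₀) (hinit' : 0 ≤ f' t₀ + γ₁ * f t₀) :
    ∀ t ∈ s, 0 ≤ f t ∧ 0 ≤ f' t + γ₁ * f t := by
  have hfactor : ∀ t ∈ s, 0 ≤ (f'' t + γ₁ * f' t) + γ₂ * (f' t + γ₁ * f t) := fun t ht ↦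
    calc
      0 ≤ f'' t + (γ₁ + γ₂) * f' t + γ₁ * γ₂ * f t := hineq t ht
      _ = (f'' t + γ₁ * f' t) + γ₂ * (f' t + γ₁ * f t) := by ring
  have hfirst_order : ∀ t ∈ s, 0 ≤ f' t + γ₁ * f t :=
    nonneg_of_deriv_add_mul_nonneg hs ht₀ (f := fun t ↦ f' t + γ₁ * f t)
      (fun t ht ↦ (hf' t ht).add ((hf t ht).const_mul γ₁)) hfactor hinit'
  exact fun t ht ↦ ⟨nonneg_of_deriv_add_mul_nonneg hs ht₀ hf hfirst_order hinit t ht,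
    hfirst_order t ht⟩

end DifferentialInequality

theorem div_add_one_le_self {K : Type*} [Field K] [LinearOrder K] [IsStrictOrderedRing K] {x : K}
    (hx : -1 < x) : x / (x + 1) ≤ x := by
  rw [div_le_iff₀ (neg_lt_iff_pos_add.mp hx)]
  calc
    x ≤ x + x ^ 2 := le_add_of_nonneg_right (sq_nonneg x)
    _ = x * (x + 1) := by ring

theorem second_order_graceful_primary_safety_general {γ₁ γ₂ t₀ : ℝ} (hγ : 0 ≤ γ₁ * γ₂)
    {s : Set ℝ} (hs : Convex ℝ s) (ht₀ : IsLeast s t₀) {h h' h'' : ℝ → ℝ}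
    (hderiv : ∀ t ∈ s, HasDerivWithinAt h (h' t) s t)
    (hderiv' : ∀ t ∈ s, HasDerivWithinAt h' (h'' t) s t)
    (hgt : ∀ t ∈ s, -1 < h t)
    (hineq : ∀ t ∈ s, 0 ≤ h'' t + (γ₁ + γ₂) * h' t + γ₁ * γ₂ * (h t / (h t + 1)))
    (hinit : 0 ≤ h t₀) (hinit' : 0 ≤ h' t₀ + γ₁ * h t₀) :
    ∀ t ∈ s, 0 ≤ h t ∧ 0 ≤ h' t + γ₁ * h t := by
  have hlinear : ∀ t ∈ s, 0 ≤ h'' t + (γ₁ + γ₂) * h' t + γ₁ * γ₂ * h t := fun t ht ↦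
    calc
      0 ≤ h'' t + (γ₁ + γ₂) * h' t + γ₁ * γ₂ * (h t / (h t + 1)) := hineq t ht
      _ ≤ h'' t + (γ₁ + γ₂) * h' t + γ₁ * γ₂ * h t := by
        gcongr
        exact div_add_one_le_self (hgt t ht)
  exact nonneg_and_deriv_add_mul_nonneg_of_second_order hs ht₀ hderiv hderiv' hlinear hinit hinit'

theorem second_order_graceful_primary_safety (γ₁ γ₂ : ℝ) (hγ₁ : 0 < γ₁) (hγ₂ : 0 < γ₂)
    (h : ℝ → ℝ) (hdiff : Differentiable ℝ h) (hdiff2 : Differentiable ℝ (deriv h))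
    (hgt : ∀ t : ℝ, 0 ≤ t → h t > -1)
    (hineq : ∀ t : ℝ, 0 ≤ t →
      deriv (deriv h) t + (γ₁ + γ₂) * deriv h t + γ₁ * γ₂ * (h t / (h t + 1)) ≥ 0)
    (h0 : 0 ≤ h 0) (h0' : 0 ≤ deriv h 0 + γ₁ * h 0) :
    ∀ t : ℝ, 0 ≤ t → 0 ≤ h t ∧ 0 ≤ deriv h t + γ₁ * h t :=
  second_order_graceful_primary_safety_general (mul_pos hγ₁ hγ₂).le (convex_Ici 0) isLeast_Ici
    (fun t _ ↦ (hdiff t).hasDerivAt.hasDerivWithinAt)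
    (fun t _ ↦ (hdiff2 t).hasDerivAt.hasDerivWithinAt) hgt hineq h0 h0'
end
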